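/- Let d ≥ 2 be any integer and set n = d − 1. Let t = (t_{ij}) and s = (s_{ij}) be families of real numbers indexed by pairs 1 ≤ i ≤ n, 1 ≤ j ≤ n+1−i, with all t_{ij} > 0 and all s_{ij} > 0, and let u(t), u(s) ∈ U_d be the corresponding products u(t) = B_n ⋯ B_1 with B_m = ∏_{i=1}^m (I + t_{i,m+1−i} E_{i,i+1}) (factors in order of increasing i). Then u(t) and u(s) lie in S_d, they lie in the same connected component of S_d, and u(t)⁻¹ does not lie in the connected component of S_d containing u(s). (That is, for every d ≥ 2, the inversion map does not preserve the connected component of S_d consisting of totally positive unipotent matrices.) -/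

import Mathlib

/-- `u` is upper triangular with all diagonal entries equal to `1`. -/
def IsUniUpper (d : ℕ) (u : Matrix (Fin d) (Fin d) ℝ) : Prop :=
  (∀ i j : Fin d, (j : ℕ) < (i : ℕ) → u i j = 0) ∧ (∀ i : Fin d, u i i = 1)

/-- `p_k(u)`: the determinant of the upper-right `k × k` block of `u`
(rows `1,…,k` and columns `d−k+1,…,d`, in one-based indexing). -/
noncomputable def cornerMinor (d k : ℕ) (u : Matrix (Fin d) (Fin d) ℝ) : ℝ :=
  Matrix.det (Matrix.of fun i j : Fin k =>
    if h : (i : ℕ) < d ∧ d - k + (j : ℕ) < d then u ⟨i, h.1⟩ ⟨d - k + j, h.2⟩ else 0)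

/-- `S_d = {u ∈ U_d : p_k(u) ≠ 0 for all 1 ≤ k ≤ d−1}`. -/
def Sset (d : ℕ) : Set (Matrix (Fin d) (Fin d) ℝ) :=
  {u | IsUniUpper d u ∧ ∀ k : ℕ, 1 ≤ k → k ≤ d - 1 → cornerMinor d k u ≠ 0}

/-- `E_{i,i+1}`: the `d×d` matrix whose only nonzero entry is a `1` in
position `(i, i+1)` (one-based indexing). -/
def elemE (d i : ℕ) : Matrix (Fin d) (Fin d) ℝ :=
  Matrix.of fun a b => if (a : ℕ) + 1 = i ∧ (b : ℕ) = i then 1 else 0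

/-- The block `B_m = ∏_{i=1}^{m} (I + t_{i,m+1−i} E_{i,i+1})`, factors in order of
increasing `i`. -/
def blockB (n : ℕ) (t : ℕ → ℕ → ℝ) (m : ℕ) : Matrix (Fin (n + 1)) (Fin (n + 1)) ℝ :=
  ((List.range m).map (fun i' => (1 : Matrix (Fin (n + 1)) (Fin (n + 1)) ℝ)
      + t (i' + 1) (m - i') • elemE (n + 1) (i' + 1))).prod

/-- `u(t) = B_n · B_{n−1} ⋯ B_1`. -/
def uProd (n : ℕ) (t : ℕ → ℕ → ℝ) : Matrix (Fin (n + 1)) (Fin (n + 1)) ℝ :=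
  ((List.range n).map (fun m' => blockB n t (n - m'))).prod

/-- One reduction step: peel off the last column by the row operations
`row i - (c_i / c_{i+1}) row (i+1)`, where `c` is the last column. -/
noncomputable def redMat (m : ℕ) (u : Matrix (Fin (m + 1)) (Fin (m + 1)) ℝ) :
    Matrix (Fin m) (Fin m) ℝ :=
  Matrix.of fun i j => u i.castSucc j.castSucc
    - (u i.castSucc (Fin.last m) / u i.succ (Fin.last m)) * u i.succ j.castSucc

/-- The positive set, defined by recursive peeling. -/
def PosSet : (m : ℕ) → Set (Matrix (Fin m) (Fin m) ℝ)
  | 0 => Set.univ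
  | (m + 1) => {u | ∀ i, 0 < u i (Fin.last m)} ∩ Set.preimage (redMat m) (PosSet m)

lemma redMat_uni (m : ℕ) (u : Matrix (Fin (m + 1)) (Fin (m + 1)) ℝ)
    (hu : IsUniUpper (m + 1) u) : IsUniUpper m (redMat m u) := by
  refine ⟨fun i j hij => ?_, fun i => ?_⟩
  · have h1 := hu.1 i.castSucc j.castSucc (by simpa using hij)
    have h2 := hu.1 i.succ j.castSucc (by simp; omega)
    simp [redMat, h1, h2]
  · have h1 := hu.2 i.castSucc
    have h2 := hu.1 i.succ i.castSucc (by simp)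
    simp [redMat, h1, h2]

lemma redMat_continuousOn (m : ℕ) :
    ContinuousOn (redMat m) {u | ∀ i, 0 < u i (Fin.last m)} := by
  unfold redMat
  refine continuousOn_pi.2 fun i => continuousOn_pi.2 fun j => ?_
  simp only [Matrix.of_apply]
  have hc : ∀ a b : Fin (m + 1), ContinuousOn
      (fun u : Matrix (Fin (m + 1)) (Fin (m + 1)) ℝ => u a b)
      {u | ∀ i, 0 < u i (Fin.last m)} := fun a b =>
    (continuous_id.matrix_elem a b).continuousOn
  exact (hc _ _).sub (((hc _ _).div (hc _ _) (fun u hu => (hu _).ne')).mul (hc _ _))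

lemma colPos_isOpen (m : ℕ) :
    IsOpen {u : Matrix (Fin (m + 1)) (Fin (m + 1)) ℝ | ∀ i, 0 < u i (Fin.last m)} := by
  simp only [Set.ofPred_forall]
  exact isOpen_iInter_of_finite fun i =>
    isOpen_lt continuous_const (continuous_id.matrix_elem _ _)

lemma posSet_isOpen (m : ℕ) : IsOpen (PosSet m) := by
  induction m with
  | zero => exact isOpen_univ
  | succ m ih => exact (redMat_continuousOn m).isOpen_inter_preimage (colPos_isOpen m) ih

lemma posSet_nonneg (m : ℕ) : ∀ u ∈ PosSet m, IsUniUpper m u → ∀ i j, 0 ≤ u i j := by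
  induction m with
  | zero => intro u _ _ i; exact i.elim0
  | succ m ih =>
    intro u hu hU i j
    have hr := ih _ hu.2 (redMat_uni m u hU)
    induction j using Fin.lastCases with
    | last => exact (hu.1 i).le
    | cast j =>
      induction i using Fin.reverseInduction with
      | last => rw [hU.1 (Fin.last m) j.castSucc (by simp)]
      | cast i hi =>
        have h1 := hr i j
        simp only [redMat, Matrix.of_apply] at h1
        have h2 : 0 ≤ u i.castSucc (Fin.last m) / u i.succ (Fin.last m) :=
          (div_pos (hu.1 _) (hu.1 _)).le
        nlinarith [mul_nonneg h2 hi]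

lemma cornerMinor_succ (m k : ℕ) (hk : k < m + 1) (u : Matrix (Fin (m + 1)) (Fin (m + 1)) ℝ)
    (hc : ∀ i, u i (Fin.last m) ≠ 0) :
    cornerMinor (m + 1) (k + 1) u = u ⟨k, hk⟩ (Fin.last m) * cornerMinor m k (redMat m u) := by
  let M : Matrix (Fin (k + 1)) (Fin (k + 1)) ℝ :=
    Matrix.of fun i j => u ⟨i, by omega⟩ ⟨m - k + j, by omega⟩
  have hM : cornerMinor (m + 1) (k + 1) u = M.det := by
    unfold cornerMinor
    congr 1
    ext i j
    simp only [M, Matrix.of_apply]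
    rw [dif_pos (by omega)]
    congr 2
    omega
  let L : Matrix (Fin (k + 1)) (Fin (k + 1)) ℝ :=
    Matrix.of fun a b => if a = b then 1 else
      if (a : ℕ) + 1 = b then -(u ⟨a, by omega⟩ (Fin.last m) / u ⟨b, by omega⟩ (Fin.last m)) else 0
  have hL : L.det = 1 := by
    rw [Matrix.det_of_upperTriangular]
    · simp [L]
    · intro a b hab
      simp only [id] at hab
      simp only [L, Matrix.of_apply]
      rw [if_neg (by omega), if_neg (by omega)]
  have hLM : ∀ (i : Fin k) j, (L * M) i.castSucc j = M i.castSucc j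
      - (u ⟨i, by omega⟩ (Fin.last m) / u ⟨i + 1, by omega⟩ (Fin.last m)) * M i.succ j := by
    intro i j
    rw [Matrix.mul_apply, Finset.sum_eq_add i.castSucc i.succ]
    · simp [L, Fin.ext_iff]; ring
    · simp [Fin.ext_iff]
    · intro c _ hc
      simp only [L, Matrix.of_apply]
      rw [if_neg (fun h => hc.1 h.symm), if_neg, zero_mul]
      intro h; apply hc.2; ext; simpa using h.symm
    · simp
    · simp
  have hLl : ∀ j, (L * M) (Fin.last k) j = M (Fin.last k) j := by
    intro j
    rw [Matrix.mul_apply, Finset.sum_eq_single (Fin.last k)]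
    · simp [L]
    · intro c _ hc
      simp only [L, Matrix.of_apply]
      rw [if_neg (fun h => hc h.symm), if_neg, zero_mul]
      simp; omega
    · simp
  have hlast : ∀ a : Fin (k + 1), M a (Fin.last k) = u ⟨a, by omega⟩ (Fin.last m) := by
    intro a
    simp only [M, Matrix.of_apply]
    congr 1
    ext; simp; omega
  have hdet : M.det = (L * M).det := by rw [Matrix.det_mul, hL, one_mul]
  rw [hM, hdet, Matrix.det_succ_column _ (Fin.last k), Finset.sum_eq_single (Fin.last k)]
  · rw [hLl, hlast]
    have : (-1 : ℝ) ^ ((Fin.last k : ℕ) + (Fin.last k : ℕ)) = 1 := by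
      rw [← two_mul, pow_mul]; simp
    rw [this, one_mul]
    congr 1
    unfold cornerMinor
    congr 1
    ext i j
    simp only [Matrix.submatrix_apply, Fin.succAbove_last, Matrix.of_apply]
    rw [hLM, dif_pos (by omega)]
    simp [M, redMat]
  · intro a _ ha
    obtain ⟨i, rfl⟩ := Fin.exists_castSucc_eq.2 ha
    rw [hLM, hlast, hlast]
    have h0 := hc ⟨i + 1, by omega⟩
    have : u ⟨(i.castSucc : Fin (k+1)), by omega⟩ (Fin.last m)
      - u ⟨i, by omega⟩ (Fin.last m) / u ⟨i + 1, by omega⟩ (Fin.last m)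
        * u ⟨(i.succ : Fin (k+1)), by omega⟩ (Fin.last m) = 0 := by
      simp only [Fin.val_castSucc, Fin.val_succ]
      rw [div_mul_cancel₀ _ h0, sub_self]
    rw [this]; ring
  · simp

lemma posSet_sub_S (m : ℕ) : ∀ u ∈ PosSet m, IsUniUpper m u → u ∈ Sset m := by
  induction m with
  | zero => intro u _ hU; exact ⟨hU, fun k h1 h2 => by omega⟩
  | succ m ih =>
    intro u hu hU
    refine ⟨hU, fun k h1 h2 => ?_⟩
    obtain ⟨k, rfl⟩ : ∃ k', k = k' + 1 := ⟨k - 1, by omega⟩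
    rw [cornerMinor_succ m k (by omega) u (fun i => (hu.1 i).ne')]
    refine mul_ne_zero (hu.1 _).ne' ?_
    rcases Nat.eq_zero_or_pos k with rfl | hk
    · simp [cornerMinor]
    · exact (ih _ hu.2 (redMat_uni m u hU)).2 k hk (by omega)

lemma posSet_closure (m : ℕ) :
    ∀ u ∈ closure (PosSet m ∩ {u | IsUniUpper m u}), u ∈ Sset m → u ∈ PosSet m := by
  induction m with
  | zero => intro u _ _; trivial
  | succ m ih =>
    intro u hcl hS
    have hU := hS.1
    have hQ : IsClosed {w : Matrix (Fin (m + 1)) (Fin (m + 1)) ℝ |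
        (∀ i, 0 ≤ w i (Fin.last m)) ∧ ∀ i : Fin m, w i.castSucc (Fin.last m) ≤
          w i.castSucc i.succ * w i.succ (Fin.last m)} := by
      have hc : ∀ a b : Fin (m + 1), Continuous
        (fun u : Matrix (Fin (m + 1)) (Fin (m + 1)) ℝ => u a b) := fun a b =>
        continuous_id.matrix_elem a b
      simp only [Set.ofPred_and, Set.ofPred_forall]
      exact (isClosed_iInter fun i => isClosed_le continuous_const (hc _ _)).inter
        (isClosed_iInter fun i => isClosed_le (hc _ _) ((hc _ _).mul (hc _ _)))
    have hsub : closure (PosSet (m + 1) ∩ {u | IsUniUpper (m + 1) u}) ⊆ _ :=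
      closure_minimal (t := {w : Matrix (Fin (m + 1)) (Fin (m + 1)) ℝ |
        (∀ i, 0 ≤ w i (Fin.last m)) ∧ ∀ i : Fin m, w i.castSucc (Fin.last m) ≤
          w i.castSucc i.succ * w i.succ (Fin.last m)}) (by
        rintro w ⟨hw, hwU⟩
        refine ⟨fun i => (hw.1 i).le, fun i => ?_⟩
        rcases Fin.eq_castSucc_or_eq_last i.succ with ⟨j, hj⟩ | hl
        · have h1 := posSet_nonneg m _ hw.2 (redMat_uni m w hwU) i j
          simp only [redMat, Matrix.of_apply] at h1
          rw [← hj, hwU.2 i.succ, mul_one, sub_nonneg, div_le_iff₀ (hw.1 _)] at h1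
          exact h1
        · rw [hl, hwU.2, mul_one]) hQ
    obtain ⟨hn, hle⟩ := hsub hcl
    have h0 : u 0 (Fin.last m) ≠ 0 := by
      rcases Nat.eq_zero_or_pos m with rfl | hm
      · have := hU.2 0
        simp [Fin.last, this]
      · have := hS.2 1 le_rfl (by omega)
        intro h
        apply this
        unfold cornerMinor
        rw [Matrix.det_unique]
        simp only [Matrix.of_apply]
        rw [dif_pos (by simp)]
        rw [← h]
        congr 1
    have hpos : ∀ i, 0 < u i (Fin.last m) := by
      intro i
      induction i using Fin.induction with
      | zero => exact lt_of_le_of_ne (hn 0) (Ne.symm h0)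
      | succ i hi =>
        refine lt_of_le_of_ne (hn _) fun h => ?_
        have := hle i
        rw [← h, mul_zero] at this
        linarith
    refine ⟨hpos, ih _ ?_ ⟨redMat_uni m u hU, fun k h1 h2 => ?_⟩⟩
    · have hca : ContinuousAt (redMat m) u :=
        (redMat_continuousOn m).continuousAt ((colPos_isOpen m).mem_nhds hpos)
      have := mem_closure_image hca hcl
      refine closure_mono ?_ this
      rintro _ ⟨w, ⟨hw, hwU⟩, rfl⟩
      exact ⟨hw.2, redMat_uni m w hwU⟩
    · have h3 := hS.2 (k + 1) (by omega) (by omega)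
      rw [cornerMinor_succ m k (by omega) u (fun i => (hpos i).ne')] at h3
      exact right_ne_zero_of_mul h3

/-- `M` is the block matrix `diag(v, 1)`. -/
def IsEmb (m : ℕ) (M : Matrix (Fin (m + 1)) (Fin (m + 1)) ℝ) (v : Matrix (Fin m) (Fin m) ℝ) :
    Prop :=
  (∀ i j, M i.castSucc j.castSucc = v i j) ∧ (∀ i : Fin m, M i.castSucc (Fin.last m) = 0) ∧
  (∀ j : Fin m, M (Fin.last m) j.castSucc = 0) ∧ M (Fin.last m) (Fin.last m) = 1

lemma IsEmb.one (m : ℕ) : IsEmb m 1 1 := by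
  refine ⟨fun i j => ?_, fun i => ?_, fun j => ?_, ?_⟩
  · simp [Matrix.one_apply]
  · exact Matrix.one_apply_ne (Fin.castSucc_lt_last i).ne
  · exact Matrix.one_apply_ne (Fin.castSucc_lt_last j).ne'
  · simp

lemma IsEmb.mul {m : ℕ} {M N : Matrix (Fin (m + 1)) (Fin (m + 1)) ℝ}
    {v w : Matrix (Fin m) (Fin m) ℝ} (h : IsEmb m M v) (h' : IsEmb m N w) :
    IsEmb m (M * N) (v * w) := by
  obtain ⟨a, b, c, d⟩ := h
  obtain ⟨a', b', c', d'⟩ := h'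
  refine ⟨fun i j => ?_, fun i => ?_, fun j => ?_, ?_⟩ <;>
    simp [Matrix.mul_apply, Fin.sum_univ_castSucc, *]

lemma IsEmb.list {m : ℕ} {ι : Type} (l : List ι) (f : ι → Matrix (Fin (m + 1)) (Fin (m + 1)) ℝ)
    (g : ι → Matrix (Fin m) (Fin m) ℝ) (h : ∀ i ∈ l, IsEmb m (f i) (g i)) :
    IsEmb m (l.map f).prod (l.map g).prod := by
  induction l with
  | nil => simpa using IsEmb.one m
  | cons a l ih =>
    simp only [List.map_cons, List.prod_cons]
    exact (h a (by simp)).mul (ih fun i hi => h i (by simp [hi]))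

lemma IsEmb.elem (m i : ℕ) (hi : i + 1 < m) (x : ℝ) :
    IsEmb m (1 + x • elemE (m + 1) (i + 1)) (1 + x • elemE m (i + 1)) := by
  obtain ⟨a, b, c, d⟩ := IsEmb.one m
  refine ⟨fun i j => ?_, fun i => ?_, fun j => ?_, ?_⟩
  · rw [Matrix.add_apply, a, Matrix.add_apply]; simp [elemE]
  · rw [Matrix.add_apply, b]; simp [elemE]; omega
  · rw [Matrix.add_apply, c]; simp [elemE]; omega
  · rw [Matrix.add_apply, d]; simp [elemE]; omega

lemma IsEmb.block (n : ℕ) (t : ℕ → ℕ → ℝ) (m : ℕ) (hm : m ≤ n) :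
    IsEmb (n + 1) (blockB (n + 1) t m) (blockB n t m) := by
  unfold blockB
  refine IsEmb.list _ _ _ fun i hi => IsEmb.elem _ _ ?_ _
  have := List.mem_range.1 hi
  omega

lemma uProd_succ (n : ℕ) (t : ℕ → ℕ → ℝ) :
    ∃ M, IsEmb (n + 1) M (uProd n t) ∧ uProd (n + 1) t = blockB (n + 1) t (n + 1) * M := by
  refine ⟨((List.range n).map (fun m' => blockB (n + 1) t (n - m'))).prod, ?_, ?_⟩
  · exact IsEmb.list _ _ _ fun i hi => IsEmb.block _ _ _ (by omega)
  · unfold uProd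
    rw [List.range_succ_eq_map]
    simp [Function.comp_def]

lemma prefix_apply (n : ℕ) (τ : ℕ → ℝ) (r : ℕ) (hr : r ≤ n) (i j : Fin (n + 1)) :
    ((List.range r).map (fun l => (1 : Matrix (Fin (n + 1)) (Fin (n + 1)) ℝ)
      + τ l • elemE (n + 1) (l + 1))).prod i j =
    if (i : ℕ) = j then 1 else
      if (i : ℕ) < j ∧ (j : ℕ) ≤ r then ∏ l ∈ Finset.Ico (i : ℕ) j, τ l else 0 := by
  induction r generalizing j with
  | zero =>
    simp only [List.range_zero, List.map_nil, List.prod_nil, Matrix.one_apply, Fin.ext_iff]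
    split_ifs <;> first | rfl | omega
  | succ r ih =>
    rw [List.range_succ, List.map_append, List.prod_append]
    simp only [List.map_cons, List.map_nil, List.prod_cons, List.prod_nil, mul_one]
    rw [mul_add, mul_one, Matrix.add_apply, Matrix.mul_smul, Matrix.smul_apply, ih (by omega)]
    have hE : ∀ A : Matrix (Fin (n + 1)) (Fin (n + 1)) ℝ,
        (A * elemE (n + 1) (r + 1)) i j = if (j : ℕ) = r + 1 then A i ⟨r, by omega⟩ else 0 := by
      intro A
      rw [Matrix.mul_apply, Finset.sum_eq_single ⟨r, by omega⟩]
      · simp [elemE]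
      · intro b _ hb
        have : ¬ (b : ℕ) = r := fun h => hb (Fin.ext h)
        simp [elemE, this]
      · simp
    rw [hE, ih (by omega)]
    by_cases hj : (j : ℕ) = r + 1
    · rw [if_pos hj]
      simp only [hj]
      rcases lt_trichotomy (i : ℕ) (r + 1) with h | h | h
      · rw [if_neg (show ¬ (i : ℕ) = r + 1 by omega), if_neg (show ¬ (i : ℕ) = r + 1 by omega),
          if_neg (show ¬ ((i : ℕ) < r + 1 ∧ r + 1 ≤ r) by omega),
          if_pos (show ((i : ℕ) < r + 1 ∧ r + 1 ≤ r + 1) by omega),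
          Finset.prod_Ico_succ_top (by omega)]
        by_cases h' : (i : ℕ) = r
        · rw [if_pos h']; simp [h']
        · rw [if_neg h', if_pos (show (i : ℕ) < r ∧ r ≤ r by omega)]
          simp [mul_comm]
      · rw [if_pos h, if_pos h, if_neg (show ¬ (i : ℕ) = r by omega),
          if_neg (show ¬ ((i : ℕ) < r ∧ r ≤ r) by omega)]
        simp
      · rw [if_neg (show ¬ (i : ℕ) = r + 1 by omega), if_neg (show ¬ (i : ℕ) = r + 1 by omega),
          if_neg (show ¬ ((i : ℕ) < r + 1 ∧ r + 1 ≤ r) by omega),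
          if_neg (show ¬ ((i : ℕ) < r + 1 ∧ r + 1 ≤ r + 1) by omega),
          if_neg (show ¬ (i : ℕ) = r by omega),
          if_neg (show ¬ ((i : ℕ) < r ∧ r ≤ r) by omega)]
        simp
    · rw [if_neg hj, smul_zero, add_zero]
      have : ((i : ℕ) < j ∧ (j : ℕ) ≤ r) ↔ ((i : ℕ) < j ∧ (j : ℕ) ≤ r + 1) := by omega
      simp only [this]

lemma uni_one (m : ℕ) : IsUniUpper m 1 :=
  ⟨fun i j h => Matrix.one_apply_ne (by omega), fun i => by simp⟩

lemma uni_mul {m : ℕ} {u v} (hu : IsUniUpper m u) (hv : IsUniUpper m v) :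
    IsUniUpper m (u * v) := by
  refine ⟨fun i j h => ?_, fun i => ?_⟩
  · rw [Matrix.mul_apply]
    refine Finset.sum_eq_zero fun k _ => ?_
    rcases lt_or_ge (k : ℕ) i with h1 | h1
    · rw [hu.1 _ _ h1, zero_mul]
    · rw [hv.1 k j (by omega), mul_zero]
  · rw [Matrix.mul_apply, Finset.sum_eq_single i]
    · rw [hu.2, hv.2, mul_one]
    · intro k _ hk
      rcases lt_or_ge (k : ℕ) i with h1 | h1
      · rw [hu.1 _ _ h1, zero_mul]
      · rw [hv.1 k i (by omega), mul_zero]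
    · simp

lemma uni_list {m : ℕ} (l : List (Matrix (Fin m) (Fin m) ℝ)) (h : ∀ u ∈ l, IsUniUpper m u) :
    IsUniUpper m l.prod := by
  induction l with
  | nil => exact uni_one m
  | cons a l ih =>
    rw [List.prod_cons]
    exact uni_mul (h a (by simp)) (ih fun u hu => h u (by simp [hu]))

lemma uni_elem (m i : ℕ) (x : ℝ) : IsUniUpper m (1 + x • elemE m (i + 1)) := by
  refine ⟨fun a b h => ?_, fun a => ?_⟩
  · rw [Matrix.add_apply, Matrix.one_apply_ne (by omega)]
    simp [elemE]; omega
  · simp [elemE]; omega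

lemma uni_uProd (n : ℕ) (t : ℕ → ℕ → ℝ) : IsUniUpper (n + 1) (uProd n t) := by
  refine uni_list _ fun u hu => ?_
  obtain ⟨m, _, rfl⟩ := List.mem_map.1 hu
  refine uni_list _ fun u hu => ?_
  obtain ⟨i, _, rfl⟩ := List.mem_map.1 hu
  exact uni_elem _ _ _

lemma uProd_pos (n : ℕ) (t : ℕ → ℕ → ℝ)
    (ht : ∀ i j : ℕ, 1 ≤ i → i ≤ n → 1 ≤ j → j ≤ n + 1 - i → 0 < t i j) :
    uProd n t ∈ PosSet (n + 1) := by
  induction n with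
  | zero =>
    refine ⟨fun i => ?_, trivial⟩
    have : i = Fin.last 0 := Fin.ext (by simp)
    rw [this, (uni_uProd 0 t).2]
    exact one_pos
  | succ n ih =>
    have ih' := ih fun i j h1 h2 h3 h4 => ht i j h1 (by omega) h3 (by omega)
    obtain ⟨M, ⟨ha, hb, hc, hd⟩, hM⟩ := uProd_succ n t
    let τ : ℕ → ℝ := fun l => t (l + 1) (n + 1 - l)
    have hτ : ∀ l, l < n + 1 → 0 < τ l := fun l hl =>
      ht _ _ (by omega) (by omega) (by omega) (by omega)
    have hB : ∀ i j, blockB (n + 1) t (n + 1) i j = if (i : ℕ) = j then 1 else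
        if (i : ℕ) < j ∧ (j : ℕ) ≤ n + 1 then ∏ l ∈ Finset.Ico (i : ℕ) j, τ l else 0 :=
      fun i j => prefix_apply (n + 1) τ (n + 1) le_rfl i j
    set B := blockB (n + 1) t (n + 1) with hBdef
    have hrow : ∀ (i : Fin (n + 1)) (j : Fin (n + 2)),
        B i.castSucc j = (if (i : ℕ) = j then 1 else 0) + τ i * B i.succ j := by
      intro i j
      rw [hB, hB]
      have hj : (j : ℕ) ≤ n + 1 := by omega
      simp only [Fin.val_castSucc, Fin.val_succ, hj, and_true]
      rcases lt_trichotomy (i : ℕ) j with h | h | h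
      · rw [if_neg h.ne, if_neg h.ne, if_pos h, zero_add, Finset.prod_eq_prod_Ico_succ_bot h]
        congr 1
        by_cases h' : (i : ℕ) + 1 = j
        · rw [if_pos h']; simp [h']
        · rw [if_neg h', if_pos (by omega)]
      · rw [if_pos h, if_pos h, if_neg (show ¬ (i : ℕ) + 1 = j by omega),
          if_neg (show ¬ (i : ℕ) + 1 < j by omega)]
        simp
      · rw [if_neg h.ne', if_neg h.ne', if_neg h.not_gt,
          if_neg (show ¬ (i : ℕ) + 1 = j by omega), if_neg (show ¬ (i : ℕ) + 1 < j by omega)]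
        simp
    have hcol : ∀ i, (B * M) i (Fin.last (n + 1)) = B i (Fin.last (n + 1)) := by
      intro i
      simp [Matrix.mul_apply, Fin.sum_univ_castSucc, hb, hd]
    have hpos : ∀ i, 0 < B i (Fin.last (n + 1)) := by
      intro i
      rw [hB]
      split_ifs with h1 h2
      · exact one_pos
      · refine Finset.prod_pos fun l hl => hτ l ?_
        simpa using (Finset.mem_Ico.1 hl).2
      · exact absurd ⟨by have := i.2; simp at h1 ⊢; omega, by simp⟩ h2
    rw [hM]
    refine ⟨fun i => by rw [hcol]; exact hpos i, ?_⟩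
    have hred : redMat (n + 1) (B * M) = uProd n t := by
      ext i j
      simp only [redMat, Matrix.of_apply]
      rw [hcol, hcol]
      have h1 : B i.castSucc (Fin.last (n + 1)) / B i.succ (Fin.last (n + 1)) = τ i := by
        rw [hrow, if_neg (show ¬ (i : ℕ) = (Fin.last (n + 1) : ℕ) by simp; omega), zero_add,
          mul_div_assoc, div_self (hpos _).ne', mul_one]
      rw [h1, Matrix.mul_apply, Matrix.mul_apply, Finset.mul_sum, ← Finset.sum_sub_distrib,
        Finset.sum_eq_single i.castSucc]
      · rw [hrow, if_pos (by simp), ha]; ring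
      · intro b _ hb
        rw [hrow, if_neg (fun h => hb (Fin.ext h.symm))]; ring
      · simp
    show redMat (n + 1) (B * M) ∈ PosSet (n + 1)
    rw [hred]
    exact ih'

lemma preconn_sub (m : ℕ) (C : Set (Matrix (Fin m) (Fin m) ℝ)) (hC : IsPreconnected C)
    (hS : C ⊆ Sset m) (hne : (C ∩ PosSet m).Nonempty) : C ⊆ PosSet m := by
  intro u hu
  by_contra hu'
  obtain ⟨w, hw, hw1, hw2⟩ := hC (PosSet m) (closure (PosSet m ∩ {u | IsUniUpper m u}))ᶜ
    (posSet_isOpen m) isClosed_closure.isOpen_compl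
    (fun v hv => by
      by_cases h : v ∈ closure (PosSet m ∩ {u | IsUniUpper m u})
      · exact Or.inl (posSet_closure m v h (hS hv))
      · exact Or.inr h) hne
    ⟨u, hu, fun h => hu' (posSet_closure m u h (hS hu))⟩
  exact hw2 (subset_closure ⟨hw1, (hS hw).1⟩)

lemma uProd_continuous (n : ℕ) (t s : ℕ → ℕ → ℝ) :
    Continuous fun a : ℝ => uProd n (fun i j => (1 - a) * t i j + a * s i j) := by
  unfold uProd blockB
  refine continuous_list_prod _ fun m _ => continuous_list_prod _ fun i _ => ?_
  fun_prop

/-- Here `d = n + 1` with `n ≥ 1`, so `d ≥ 2` is arbitrary. -/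
theorem totally_positive_component_not_inversion_invariant
    (n : ℕ) (hn : 1 ≤ n) (t s : ℕ → ℕ → ℝ)
    (ht : ∀ i j : ℕ, 1 ≤ i → i ≤ n → 1 ≤ j → j ≤ n + 1 - i → 0 < t i j)
    (hs : ∀ i j : ℕ, 1 ≤ i → i ≤ n → 1 ≤ j → j ≤ n + 1 - i → 0 < s i j) :
    uProd n t ∈ Sset (n + 1) ∧ uProd n s ∈ Sset (n + 1) ∧
    uProd n s ∈ connectedComponentIn (Sset (n + 1)) (uProd n t) ∧
    (uProd n t)⁻¹ ∉ connectedComponentIn (Sset (n + 1)) (uProd n s) := by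
  have hT := uProd_pos n t ht
  have hSp := uProd_pos n s hs
  have hTS := posSet_sub_S _ _ hT (uni_uProd n t)
  have hSS := posSet_sub_S _ _ hSp (uni_uProd n s)
  refine ⟨hTS, hSS, ?_, ?_⟩
  · have hpc : IsPreconnected
        (Set.image (fun a : ℝ => uProd n (fun i j => (1 - a) * t i j + a * s i j)) (Set.Icc 0 1)) :=
      isPreconnected_Icc.image _ (uProd_continuous n t s).continuousOn
    refine hpc.subset_connectedComponentIn ⟨0, by simp, by simp⟩ ?_ ⟨1, by simp, by simp⟩
    rintro _ ⟨a, ⟨ha0, ha1⟩, rfl⟩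
    refine posSet_sub_S _ _ (uProd_pos n _ fun i j h1 h2 h3 h4 => ?_) (uni_uProd n _)
    have h5 := ht i j h1 h2 h3 h4
    have h6 := hs i j h1 h2 h3 h4
    rcases ha0.eq_or_lt with rfl | h
    · simpa using h5
    · have h7 := mul_pos h h6
      have h8 := mul_nonneg (sub_nonneg.2 ha1) h5.le
      linarith
  · intro hmem
    have hw := preconn_sub (n + 1) _ isPreconnected_connectedComponentIn
      (connectedComponentIn_subset _ _) ⟨_, mem_connectedComponentIn hSS, hSp⟩ hmem
    have hwU := (connectedComponentIn_subset _ _ hmem).1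
    have hU := uni_uProd n t
    have hdet : (uProd n t).det = 1 := by
      rw [Matrix.det_of_upperTriangular (fun a b hab => hU.1 a b hab)]
      simp [hU.2]
    have hmul : uProd n t * (uProd n t)⁻¹ = 1 :=
      Matrix.mul_nonsing_inv _ (by rw [hdet]; exact isUnit_one)
    have h1 := congrFun (congrFun hmul 0) (Fin.last n)
    rw [Matrix.one_apply_ne (by simp [Fin.ext_iff]; omega), Matrix.mul_apply] at h1
    have h2 := Finset.single_le_sum
      (f := fun k => uProd n t 0 k * (uProd n t)⁻¹ k (Fin.last n))
      (fun k _ => mul_nonneg (posSet_nonneg _ _ hT hU 0 k)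
        (posSet_nonneg _ _ hw hwU k (Fin.last n))) (Finset.mem_univ 0)
    have h3 := hw.1 0
    simp only [hU.2, one_mul, h1] at h2
    linarith
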